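/- For any two distinct indices i and j, a vertex in X_i has at most one neighbor in X_j. -/

import Mathlib

open SimpleGraph

/-- The claw `K_{1,3}`: vertex 0 adjacent to 1, 2, 3. -/
def claw : SimpleGraph (Fin 4) := SimpleGraph.fromRel (fun a _ => a = 0)

/-- `4K_1`: the edgeless graph on four vertices. -/
def fourK1 : SimpleGraph (Fin 4) := ⊥

/-- `K_5 - e`: the complete graph on five vertices minus the edge {0,1}. -/
def K5e : SimpleGraph (Fin 5) :=
  SimpleGraph.fromRel (fun a b => ¬(a = 0 ∧ b = 1) ∧ ¬(a = 1 ∧ b = 0))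

/-- The 5-wheel: the cycle 0-1-2-3-4-0 together with hub 5 adjacent to all. -/
def wheel5 : SimpleGraph (Fin 6) :=
  SimpleGraph.fromRel (fun a b =>
    (a ≠ 5 ∧ b ≠ 5 ∧ b.val = (a.val + 1) % 5) ∨ a = 5 ∨ b = 5)

/-- The `C_5`-twin: the cycle 0-1-2-3-4-0 together with vertex 5, a true twin
of vertex 0 (adjacent to 0, 1 and 4). -/
def C5twin : SimpleGraph (Fin 6) :=
  SimpleGraph.fromRel (fun a b =>
    (a ≠ 5 ∧ b ≠ 5 ∧ b.val = (a.val + 1) % 5) ∨ (a = 5 ∧ (b = 0 ∨ b = 1 ∨ b = 4)))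

/-- The `P_5`-twin: the path 0-1-2-3-4 together with vertex 5, a true twin of
the middle vertex 2 (adjacent to 1, 2 and 3). -/
def P5twin : SimpleGraph (Fin 6) :=
  SimpleGraph.fromRel (fun a b =>
    (a ≠ 5 ∧ b ≠ 5 ∧ b.val = a.val + 1) ∨ (a = 5 ∧ (b = 1 ∨ b = 2 ∨ b = 3)))

/-- The chordless cycle on seven vertices. -/
def C7 : SimpleGraph (Fin 7) :=
  SimpleGraph.fromRel (fun a b => b.val = (a.val + 1) % 7)

/-- `G` is `H`-free: `G` contains no induced subgraph isomorphic to `H`,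
i.e. there is no graph embedding of `H` into `G`. -/
def Free {V W : Type*} (G : SimpleGraph V) (H : SimpleGraph W) : Prop :=
  IsEmpty (H ↪g G)

/-- `X_i`: vertices outside the five-cycle `v 0, …, v 4` whose neighbours on the
cycle are exactly `v i` and `v (i+1)`. -/
def cycX {V : Type*} (G : SimpleGraph V) (v : ZMod 5 → V) (i : ZMod 5) : Set V :=
  {w | w ∉ Set.range v ∧ ∀ j : ZMod 5, G.Adj w (v j) ↔ (j = i ∨ j = i + 1)}

/-- `Y_i`: vertices outside the five-cycle whose neighbours on the cycle are
exactly `v i, v (i+1), v (i+2), v (i+3)`. -/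
def cycY {V : Type*} (G : SimpleGraph V) (v : ZMod 5 → V) (i : ZMod 5) : Set V :=
  {w | w ∉ Set.range v ∧
    ∀ j : ZMod 5, G.Adj w (v j) ↔ (j = i ∨ j = i + 1 ∨ j = i + 2 ∨ j = i + 3)}

/-- `R`: vertices outside the five-cycle with no neighbour on the cycle. -/
def cycR {V : Type*} (G : SimpleGraph V) (v : ZMod 5 → V) : Set V :=
  {w | w ∉ Set.range v ∧ ∀ j : ZMod 5, ¬ G.Adj w (v j)}

/-!
Suppose `x ∈ X_i` has distinct neighbours `b, c ∈ X_j`. Claw-freeness at `v_j`, applied to `b`, `c`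
and `v_{j-1}`, makes `b` and `c` adjacent. If `x` saw exactly one end of the edge `v_j v_{j+1}`,
then `b`, `c` and that end would form a triangle completely joined to `x` and to the other end: a
`K_5 - e`. Hence the edges `v_i v_{i+1}` and `v_j v_{j+1}` are disjoint. In that case the edge `xb`
can be rerouted into the cycle in place of two consecutive cycle vertices, and `c` is a true twin of
`b` in the resulting induced five-cycle: a `C_5`-twin.
-/

/-- The vertices `v 0, …, v 4` form an induced five-cycle of `G` in this cyclic order.
Injectivity of `v` is not a separate requirement, see `IsInducedC5.injective`. -/
def IsInducedC5 {V : Type*} (G : SimpleGraph V) (v : ZMod 5 → V) : Prop :=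
  ∀ i j : ZMod 5, G.Adj (v i) (v j) ↔ (j = i + 1 ∨ i = j + 1)

section

variable {V : Type*} {G : SimpleGraph V}

theorem not_free_of_forall_lt {W : Type*} [LinearOrder W] {H : SimpleGraph W} (f : W → V)
    (hf : ∀ p q, p < q → f p ≠ f q ∧ (G.Adj (f p) (f q) ↔ H.Adj p q)) : ¬ _root_.Free G H := by
  have hinj : Function.Injective f := .of_lt_imp_ne fun p q hpq => (hf p q hpq).1
  have hadj : ∀ p q, G.Adj (f p) (f q) ↔ H.Adj p q := by
    intro p q
    rcases lt_trichotomy p q with hpq | rfl | hqp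
    · exact (hf p q hpq).2
    · simp only [SimpleGraph.irrefl]
    · rw [G.adj_comm, H.adj_comm]
      exact (hf q p hqp).2
  exact fun h => h.false ⟨⟨f, hinj⟩, hadj _ _⟩

theorem adj_or_adj_or_adj_of_free_claw (h : _root_.Free G claw) {a b c d : V}
    (hab : G.Adj a b) (hac : G.Adj a c) (had : G.Adj a d) (hbc : b ≠ c) (hbd : b ≠ d)
    (hcd : c ≠ d) : G.Adj b c ∨ G.Adj b d ∨ G.Adj c d := by
  by_contra! hindep
  refine not_free_of_forall_lt ![a, b, c, d] ?_ h
  simp [Fin.forall_fin_succ, claw, hab.ne, hac.ne, had.ne, *]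

theorem adj_of_free_K5e (h : _root_.Free G K5e) {a b c d e : V} (hab : a ≠ b)
    (hac : G.Adj a c) (had : G.Adj a d) (hae : G.Adj a e)
    (hbc : G.Adj b c) (hbd : G.Adj b d) (hbe : G.Adj b e)
    (hcd : G.Adj c d) (hce : G.Adj c e) (hde : G.Adj d e) : G.Adj a b := by
  by_contra hnab
  refine not_free_of_forall_lt ![a, b, c, d, e] ?_ h
  simp [Fin.forall_fin_succ, K5e, hac.ne, had.ne, hae.ne, hbc.ne, hbd.ne, hbe.ne, hcd.ne, hce.ne,
    hde.ne, *]

variable {v : ZMod 5 → V}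

theorem IsInducedC5.injective (hv : IsInducedC5 G v) : Function.Injective v := by
  intro p q hpq
  have hsucc := (hv p (p + 1)).2 (.inl rfl)
  have hpred := (hv p (p - 1)).2 (.inr (by ring))
  rw [hpq, hv] at hsucc hpred
  grind

theorem IsInducedC5.shift (hv : IsInducedC5 G v) (i : ZMod 5) :
    IsInducedC5 G fun k => v (k + i) := by
  intro p q
  simp only [hv _ _, add_right_comm _ i 1, add_left_inj]

theorem IsInducedC5.not_free_C5twin (hv : IsInducedC5 G v) {i : ZMod 5} {w : V}
    (hw : ∀ k, G.Adj w (v k) ↔ (k = i ∨ k = i + 1 ∨ k = i + 2)) : ¬ _root_.Free G C5twin := by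
  have hw_ne : ∀ k, v k ≠ w := by
    rintro m rfl
    simp only [hv m] at hw
    revert i m
    decide
  let u : ZMod 5 → V := fun k => v (k + (i + 1))
  have hu : IsInducedC5 G u := hv.shift (i + 1)
  have hu_ne (k) : u k ≠ w := hw_ne _
  have hwu (k) : G.Adj (u k) w ↔ (k = 4 ∨ k = 0 ∨ k = 1) := by
    rw [G.adj_comm, hw]
    grind
  refine not_free_of_forall_lt ![u 0, u 1, u 2, u 3, u 4, w] ?_
  simp +decide [Fin.forall_fin_succ, C5twin, hu_ne, hu.injective.eq_iff, hu _ _, hwu]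

theorem IsInducedC5.update_update (hv : IsInducedC5 G v) {i : ZMod 5} {x y : V}
    (hx : x ∈ cycX G v i) (hy : y ∈ cycX G v (i + 2)) (hxy : G.Adj x y) :
    IsInducedC5 G (Function.update (Function.update v (i + 1) x) (i + 2) y) := by
  intro p q
  have hv' := hv p q
  have hx' := hx.2
  have hy' := hy.2
  simp only [Function.update_apply]
  split_ifs <;> grind [G.adj_comm, G.irrefl]

theorem isClique_cycX (hclaw : _root_.Free G claw) (hv : IsInducedC5 G v) (i : ZMod 5) :
    G.IsClique (cycX G v i) := by
  intro b hb c hc hbc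
  have hb_pred : ¬ G.Adj b (v (i - 1)) := by
    rw [hb.2]
    grind
  have hc_pred : ¬ G.Adj c (v (i - 1)) := by
    rw [hc.2]
    grind
  have hadj_of_claw_free := adj_or_adj_or_adj_of_free_claw hclaw ((hb.2 i).2 (.inl rfl)).symm
    ((hc.2 i).2 (.inl rfl)).symm ((hv i (i - 1)).2 (.inr (by ring))) hbc
    (fun h => hb.1 ⟨_, h.symm⟩) (fun h => hc.1 ⟨_, h.symm⟩)
  exact hadj_of_claw_free.resolve_right (not_or.2 ⟨hb_pred, hc_pred⟩)

theorem adj_iff_adj_add_one_of_adj_cycX (hK5e : _root_.Free G K5e) (hv : IsInducedC5 G v)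
    {j : ZMod 5} {x b c : V} (hx : x ∉ Set.range v) (hb : b ∈ cycX G v j) (hc : c ∈ cycX G v j)
    (hbc : G.Adj b c) (hxb : G.Adj x b) (hxc : G.Adj x c) :
    G.Adj x (v j) ↔ G.Adj x (v (j + 1)) := by
  have hx_ne (k) : x ≠ v k := fun h => hx ⟨k, h.symm⟩
  have hbj := (hb.2 j).2 (.inl rfl)
  have hbj' := (hb.2 (j + 1)).2 (.inr rfl)
  have hcj := (hc.2 j).2 (.inl rfl)
  have hcj' := (hc.2 (j + 1)).2 (.inr rfl)
  have hedge := (hv j (j + 1)).2 (.inl rfl)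
  constructor <;> intro hxv
  · exact adj_of_free_K5e hK5e (hx_ne _) hxv hxb hxc hedge.symm hbj'.symm hcj'.symm
      hbj.symm hcj.symm hbc
  · exact adj_of_free_K5e hK5e (hx_ne _) hxv hxb hxc hedge hbj.symm hcj.symm
      hbj'.symm hcj'.symm hbc

theorem eq_add_two_or_eq_add_two_of_adj_cycX (hK5e : _root_.Free G K5e) (hv : IsInducedC5 G v)
    {i j : ZMod 5} (hij : i ≠ j) {x b c : V} (hx : x ∈ cycX G v i) (hb : b ∈ cycX G v j)
    (hc : c ∈ cycX G v j) (hbc : G.Adj b c) (hxb : G.Adj x b) (hxc : G.Adj x c) :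
    j = i + 2 ∨ i = j + 2 := by
  have hends := adj_iff_adj_add_one_of_adj_cycX hK5e hv hx.1 hb hc hbc hxb hxc
  rw [hx.2, hx.2] at hends
  clear * - hij hends
  revert i j
  decide

theorem stmt_12_general (hclaw : _root_.Free G claw) (hK5e : _root_.Free G K5e)
    (hC5t : _root_.Free G C5twin) (hv : IsInducedC5 G v) {i j : ZMod 5} (hij : i ≠ j) {x : V}
    (hx : x ∈ cycX G v i) : (G.neighborSet x ∩ cycX G v j).Subsingleton := by
  rintro b ⟨hxb, hb⟩ c ⟨hxc, hc⟩
  rw [G.mem_neighborSet] at hxb hxc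
  by_contra hne
  have hbc : G.Adj b c := isClique_cycX hclaw hv j hb hc hne
  have hcx := hxc.symm
  have hcb := hbc.symm
  obtain rfl | rfl := eq_add_two_or_eq_add_two_of_adj_cycX hK5e hv hij hx hb hc hbc hxb hxc
  · have hc_nbrs : ∀ k, G.Adj c (Function.update (Function.update v (i + 1) x) (i + 2) b k) ↔
        (k = i + 1 ∨ k = i + 1 + 1 ∨ k = i + 1 + 2) := fun k => by
      have hck := hc.2 k
      simp only [Function.update_apply]
      split_ifs <;> grind
    exact (hv.update_update hx hb hxb).not_free_C5twin hc_nbrs hC5t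
  · have hc_nbrs : ∀ k, G.Adj c (Function.update (Function.update v (j + 1) b) (j + 2) x k) ↔
        (k = j ∨ k = j + 1 ∨ k = j + 2) := fun k => by
      have hck := hc.2 k
      simp only [Function.update_apply]
      split_ifs <;> grind
    exact (hv.update_update hb hx hxb.symm).not_free_C5twin hc_nbrs hC5t

end

theorem stmt_12     {V : Type*} [Fintype V] (G : SimpleGraph V)
    (hconn : G.Connected)
    (hclaw : _root_.Free G claw) (h4K1 : _root_.Free G fourK1) (hK5e : _root_.Free G K5e)
    (hW5 : _root_.Free G wheel5) (hC5t : _root_.Free G C5twin) (hP5t : _root_.Free G P5twin)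
    (v : ZMod 5 → V) (hv : Function.Injective v)
    (hC : ∀ i j : ZMod 5, G.Adj (v i) (v j) ↔ (j = i + 1 ∨ i = j + 1)) :
    ∀ i j : ZMod 5, i ≠ j → ∀ x ∈ cycX G v i, ∀ b ∈ cycX G v j, ∀ c ∈ cycX G v j,
      G.Adj x b → G.Adj x c → b = c :=
  fun _ _ hij _ hx _ hb _ hc hxb hxc =>
    stmt_12_general hclaw hK5e hC5t hC hij hx ⟨hxb, hb⟩ ⟨hxc, hc⟩
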